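/- Let A be a bialgebra over K and H a Hopf algebra over K with antipode S, and suppose i : H → A and π : A → H are bialgebra morphisms with π ∘ i = id_H. Define Π : A → A by Π(a) = ∑ a₍₁₎ · i(S(π(a₍₂₎))) (the convolution product of id_A with i ∘ S ∘ π). Then Π is an idempotent Rota-Baxter operator of weight -1 on A. -/

import Mathlib

open TensorProduct Coalgebra HopfAlgebra LinearMap

section RadfordHelpers

variable {K A H B : Type*} [Field K] [Ring A] [Bialgebra K A] [Ring H] [HopfAlgebra K H]
  [Ring B] [Algebra K B]

theorem radford_conv_comp (h : H →ₐ[K] B) (π : A →ₐc[K] H) (f g : H →ₗ[K] H) :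
    WithConv.toConv (h.toLinearMap ∘ₗ f ∘ₗ (π : A →ₗ[K] H)) *
      WithConv.toConv (h.toLinearMap ∘ₗ g ∘ₗ (π : A →ₗ[K] H)) =
    WithConv.toConv (h.toLinearMap ∘ₗ
      (WithConv.toConv f * WithConv.toConv g).ofConv ∘ₗ (π : A →ₗ[K] H)) := by
  have e1 := LinearMap.convMul_comp_coalgHom_distrib (WithConv.toConv f) (WithConv.toConv g)
    (π : A →ₗc[K] H)
  have e2 := LinearMap.algHom_comp_convMul_distrib h
    (WithConv.toConv (f ∘ₗ (π : A →ₗ[K] H))) (WithConv.toConv (g ∘ₗ (π : A →ₗ[K] H)))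
  apply WithConv.ofConv_injective
  refine e2.symm.trans ?_
  exact congrArg (fun t => h.toLinearMap ∘ₗ t) e1.symm

theorem radford_one_comp (h : H →ₐ[K] B) (π : A →ₐc[K] H) :
    WithConv.toConv (h.toLinearMap ∘ₗ
      (1 : WithConv (H →ₗ[K] H)).ofConv ∘ₗ (π : A →ₗ[K] H)) = 1 := by
  ext a
  simp [LinearMap.convOne_def]

theorem radford_inv_right (h : H →ₐ[K] B) (π : A →ₐc[K] H) :
    WithConv.toConv (h.toLinearMap ∘ₗ (π : A →ₗ[K] H)) *
      WithConv.toConv (h.toLinearMap ∘ₗ antipode K ∘ₗ (π : A →ₗ[K] H)) = 1 := by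
  have := radford_conv_comp h π LinearMap.id (antipode K)
  rwa [LinearMap.id_mul_antipode, radford_one_comp] at this

theorem radford_inv_left (h : H →ₐ[K] B) (π : A →ₐc[K] H) :
    WithConv.toConv (h.toLinearMap ∘ₗ antipode K ∘ₗ (π : A →ₗ[K] H)) *
      WithConv.toConv (h.toLinearMap ∘ₗ (π : A →ₗ[K] H)) = 1 := by
  have := radford_conv_comp h π (antipode K) LinearMap.id
  rwa [LinearMap.antipode_mul_id, radford_one_comp] at this

/-- The projection. -/
noncomputable def radfordPr (i : H →ₐc[K] A) (π : A →ₐc[K] H) : A →ₗ[K] A :=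
  LinearMap.mul' K A ∘ₗ
    (((i : H →ₗ[K] A) ∘ₗ antipode (R := K) (A := H) ∘ₗ (π : A →ₗ[K] H)).lTensor A) ∘ₗ
    Coalgebra.comul

/-- The right coaction of `H` on `A`. -/
noncomputable def radfordRho (π : A →ₐc[K] H) : A →ₐ[K] A ⊗[K] H :=
  (Algebra.TensorProduct.map (AlgHom.id K A) (π : A →ₐ[K] H)).comp (Bialgebra.comulAlgHom K A)

/-- The map `a ⊗ h ↦ a * b * i (S h)`. -/
noncomputable def radfordM (i : H →ₐc[K] A) (b : A) : A ⊗[K] H →ₗ[K] A :=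
  LinearMap.mul' K A ∘ₗ
    TensorProduct.map (LinearMap.mulRight K b) ((i : H →ₗ[K] A) ∘ₗ antipode K)

theorem radfordM_tmul (i : H →ₐc[K] A) (b a : A) (h : H) :
    radfordM i b (a ⊗ₜ[K] h) = a * b * i (antipode K h) := by
  simp [radfordM]

theorem radfordM_mul (i : H →ₐc[K] A) (u v : A ⊗[K] H) :
    radfordM i 1 (u * v) = radfordM i (radfordM i 1 v) u := by
  have hadd : ∀ b c : A, radfordM i (b + c) u = radfordM i b u + radfordM i c u := by
    intro b c
    induction u with
    | zero => simp
    | tmul a h => simp [radfordM_tmul, mul_add, add_mul]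
    | add x y hx hy => simp only [map_add, hx, hy]; abel
  induction v with
  | zero =>
    have h0 := hadd 0 0
    simp only [add_zero, left_eq_add] at h0
    simp [h0]
  | add x y hx hy => rw [mul_add, map_add, map_add, hx, hy, hadd]
  | tmul a h =>
    clear hadd
    induction u with
    | zero => simp
    | add x y hx hy => rw [add_mul, map_add, map_add, hx, hy]
    | tmul c k =>
      simp [radfordM_tmul, HopfAlgebra.antipode_mul_antidistrib, mul_assoc]

theorem radfordPr_eq (i : H →ₐc[K] A) (π : A →ₐc[K] H) (x : A) :
    radfordPr i π x = radfordM i 1 (radfordRho π x) := by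
  simp only [radfordPr, radfordRho, LinearMap.comp_apply, AlgHom.comp_apply,
    Bialgebra.comulAlgHom_apply]
  induction (comul x : A ⊗[K] A) with
  | zero => simp
  | add x y hx hy => simp only [map_add, hx, hy]
  | tmul a b => simp [radfordM_tmul]

theorem radfordPr_mul (i : H →ₐc[K] A) (π : A →ₐc[K] H) (x y : A) :
    radfordPr i π (x * y) = radfordM i (radfordPr i π y) (radfordRho π x) := by
  rw [radfordPr_eq, map_mul, radfordM_mul, ← radfordPr_eq]

theorem radfordPr_conv (i : H →ₐc[K] A) (π : A →ₐc[K] H) :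
    radfordPr i π = (WithConv.toConv LinearMap.id * WithConv.toConv
      ((i : H →ₗ[K] A) ∘ₗ antipode (R := K) (A := H) ∘ₗ (π : A →ₗ[K] H))).ofConv := rfl

theorem radfordRho_conv (π : A →ₐc[K] H) :
    WithConv.toConv (radfordRho π).toLinearMap =
      WithConv.toConv (Algebra.TensorProduct.includeLeft : A →ₐ[K] A ⊗[K] H).toLinearMap *
      WithConv.toConv ((Algebra.TensorProduct.includeRight : H →ₐ[K] A ⊗[K] H).toLinearMap ∘ₗ
        (π : A →ₗ[K] H)) := by
  ext x
  simp only [radfordRho, LinearMap.convMul_apply]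
  change (Algebra.TensorProduct.map (AlgHom.id K A) (π : A →ₐ[K] H)) (comul x) = _
  induction (comul x : A ⊗[K] A) with
  | zero => simp
  | add x y hx hy => simp only [map_add, hx, hy]
  | tmul a b => simp

theorem radfordRho_i (i : H →ₐc[K] A) (π : A →ₐc[K] H) (hπi : ∀ h : H, π (i h) = h) :
    WithConv.toConv (((radfordRho π).comp (i : H →ₐ[K] A)).toLinearMap ∘ₗ (π : A →ₗ[K] H)) =
      WithConv.toConv (((Algebra.TensorProduct.includeLeft : A →ₐ[K] A ⊗[K] H).comp
        (i : H →ₐ[K] A)).toLinearMap ∘ₗ (π : A →ₗ[K] H)) *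
      WithConv.toConv ((Algebra.TensorProduct.includeRight : H →ₐ[K] A ⊗[K] H).toLinearMap ∘ₗ
        (π : A →ₗ[K] H)) := by
  have e := LinearMap.convMul_comp_coalgHom_distrib
    (WithConv.toConv (Algebra.TensorProduct.includeLeft : A →ₐ[K] A ⊗[K] H).toLinearMap)
    (WithConv.toConv ((Algebra.TensorProduct.includeRight : H →ₐ[K] A ⊗[K] H).toLinearMap ∘ₗ
        (π : A →ₗ[K] H))) ((i.comp π : A →ₐc[K] A) : A →ₗc[K] A)
  rw [← radfordRho_conv] at e
  apply WithConv.ofConv_injective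
  refine Eq.trans e ?_
  have h2 : ((Algebra.TensorProduct.includeRight : H →ₐ[K] A ⊗[K] H).toLinearMap ∘ₗ
        (π : A →ₗ[K] H)) ∘ₗ ((i.comp π : A →ₐc[K] A) : A →ₗc[K] A).toLinearMap =
      (Algebra.TensorProduct.includeRight : H →ₐ[K] A ⊗[K] H).toLinearMap ∘ₗ
        (π : A →ₗ[K] H) := by
    ext a
    simp [hπi]
  exact congrArg (fun t => (WithConv.toConv
    (((Algebra.TensorProduct.includeLeft : A →ₐ[K] A ⊗[K] H).comp
        (i : H →ₐ[K] A)).toLinearMap ∘ₗ (π : A →ₗ[K] H)) * WithConv.toConv t).ofConv) h2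

theorem radford_coinv (i : H →ₐc[K] A) (π : A →ₐc[K] H) (hπi : ∀ h : H, π (i h) = h) (x : A) :
    radfordRho π (radfordPr i π x) = radfordPr i π x ⊗ₜ[K] 1 := by
  have φ := LinearMap.algHom_comp_convMul_distrib (radfordRho π)
    (WithConv.toConv LinearMap.id) (WithConv.toConv
      ((i : H →ₗ[K] A) ∘ₗ antipode (R := K) (A := H) ∘ₗ (π : A →ₗ[K] H)))
  have ψ := LinearMap.algHom_comp_convMul_distrib
    (Algebra.TensorProduct.includeLeft : A →ₐ[K] A ⊗[K] H)
    (WithConv.toConv LinearMap.id) (WithConv.toConv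
      ((i : H →ₗ[K] A) ∘ₗ antipode (R := K) (A := H) ∘ₗ (π : A →ₗ[K] H)))
  rw [← radfordPr_conv] at φ ψ
  have r := radford_inv_right ((radfordRho π).comp (i : H →ₐ[K] A)) π
  have l := radford_inv_left ((Algebra.TensorProduct.includeLeft : A →ₐ[K] A ⊗[K] H).comp
        (i : H →ₐ[K] A)) π
  have hρ := radfordRho_conv π
  have hi := radfordRho_i i π hπi
  have key : (radfordRho π).toLinearMap ∘ₗ radfordPr i π =
      (Algebra.TensorProduct.includeLeft : A →ₐ[K] A ⊗[K] H).toLinearMap ∘ₗ radfordPr i π := by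
    rw [φ, ψ]
    congr 1
    change WithConv.toConv (radfordRho π).toLinearMap * WithConv.toConv
        (((radfordRho π).comp (i : H →ₐ[K] A)).toLinearMap ∘ₗ antipode K ∘ₗ (π : A →ₗ[K] H)) =
      WithConv.toConv (Algebra.TensorProduct.includeLeft : A →ₐ[K] A ⊗[K] H).toLinearMap *
        WithConv.toConv (((Algebra.TensorProduct.includeLeft : A →ₐ[K] A ⊗[K] H).comp
        (i : H →ₐ[K] A)).toLinearMap ∘ₗ antipode K ∘ₗ (π : A →ₗ[K] H))
    rw [hi] at r
    rw [hρ]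
    generalize WithConv.toConv (((radfordRho π).comp (i : H →ₐ[K] A)).toLinearMap ∘ₗ
      antipode K ∘ₗ (π : A →ₗ[K] H)) = a at *
    generalize WithConv.toConv (((Algebra.TensorProduct.includeLeft : A →ₐ[K] A ⊗[K] H).comp
        (i : H →ₐ[K] A)).toLinearMap ∘ₗ antipode K ∘ₗ (π : A →ₗ[K] H)) = b at *
    have h3 := left_inv_eq_right_inv l (by rw [← mul_assoc]; exact r)
    rw [h3, mul_assoc]
  exact LinearMap.congr_fun key x

end RadfordHelpers

theorem radford_projection_isRotaBaxter_weight_neg_one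
    (K : Type*) [Field K] [CharZero K]
    (A : Type*) [Ring A] [Bialgebra K A]
    (H : Type*) [Ring H] [HopfAlgebra K H]
    (i : H →ₐc[K] A) (π : A →ₐc[K] H)
    (hπi : ∀ h : H, π (i h) = h) :
    -- Pr(a) = ∑ a₍₁₎ · i(S(π(a₍₂₎)))
    let Pr : A →ₗ[K] A :=
      LinearMap.mul' K A ∘ₗ
        (((i : H →ₗ[K] A) ∘ₗ antipode (R := K) (A := H) ∘ₗ (π : A →ₗ[K] H)).lTensor A) ∘ₗ
        Coalgebra.comul
    (Pr ∘ₗ Pr = Pr) ∧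
    (∀ x y : A, Pr x * Pr y = Pr (x * Pr y) + Pr (Pr x * y) + (-1 : K) • Pr (x * y)) := by
  change (radfordPr i π ∘ₗ radfordPr i π = radfordPr i π) ∧
    (∀ x y : A, radfordPr i π x * radfordPr i π y = radfordPr i π (x * radfordPr i π y) +
      radfordPr i π (radfordPr i π x * y) + (-1 : K) • radfordPr i π (x * y))
  have idem : ∀ x, radfordPr i π (radfordPr i π x) = radfordPr i π x := by
    intro x
    rw [radfordPr_eq i π (radfordPr i π x), radford_coinv i π hπi, radfordM_tmul]
    simp
  refine ⟨LinearMap.ext idem, fun x y => ?_⟩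
  rw [radfordPr_mul i π x (radfordPr i π y), idem, ← radfordPr_mul,
    radfordPr_mul i π (radfordPr i π x) y, radford_coinv i π hπi, radfordM_tmul]
  simp
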